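/- Adding the normalized directions (2,1)/√5, (1,2)/√5, (2,-1)/√5, (1,-2)/√5 to the width-1 grid directions in R² gives directional resolution dθ = arctan(1/2)/2, and tan²(arctan(1/2)/2) = (√5 - 2)². -/

import Mathlib

open Real

lemma tan_half_arctan_half : tan (arctan (1 / 2) / 2) = √5 - 2 := by
  have h5 : √5 ^ 2 = 5 := sq_sqrt (by norm_num)
  have hlo : (2 : ℝ) ≤ √5 := le_sqrt_of_sq_le (by norm_num)
  have hpos : 0 < arctan (1 / 2) := arctan_pos.2 (by norm_num)
  have hlt : arctan (1 / 2) < π / 2 := arctan_lt_pi_div_two _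
  have ht : 0 < tan (arctan (1 / 2) / 2) :=
    tan_pos_of_pos_of_lt_pi_div_two (by linarith) (by linarith)
  have hone : tan (arctan (1 / 2) / 2) < 1 := by
    refine lt_of_lt_of_eq ?_ tan_pi_div_four
    exact tan_lt_tan_of_lt_of_lt_pi_div_two (by linarith) (by linarith [pi_pos]) (by linarith)
  have h := tan_two_mul (x := arctan (1 / 2) / 2)
  rw [mul_div_cancel₀ _ (two_ne_zero' ℝ), tan_arctan] at h
  set t := tan (arctan (1 / 2) / 2)
  have h1 : 1 - t ^ 2 ≠ 0 := by nlinarith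
  field_simp at h
  have h2 : (t - (√5 - 2)) * (t + (√5 + 2)) = 0 := by linear_combination -h - h5
  rcases mul_eq_zero.1 h2 with h3 | h3 <;> linarith

/-- A unit vector whose polar angle is at most `arctan t` in absolute value has first coordinate
at least `cos (arctan t)`. -/
lemma le_fst_of_abs_snd_le {c t u v : ℝ} (hc : c ^ 2 * (1 + t ^ 2) = 1) (hu : 0 ≤ u)
    (huv : u ^ 2 + v ^ 2 = 1) (hv : |v| ≤ t * u) : c ≤ u := by
  have h : v ^ 2 ≤ (t * u) ^ 2 :=
    sq_le_sq' (by linarith [neg_abs_le v]) (by linarith [le_abs_self v])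
  refine abs_le_of_sq_le_sq' ?_ hu |>.2
  have ht : 0 < 1 + t ^ 2 := by positivity
  exact le_of_mul_le_mul_right (by nlinarith) ht

lemma exists_stencil_close_of_le {c q r x y : ℝ} (hq : 0 < q) (hq2 : q ^ 2 = 1 / 5) (hr : 0 < r)
    (hr2 : r ^ 2 = 1 / 2) (hc : c ^ 2 * (1 + (5 * q - 2) ^ 2) = 1) (hy : 0 ≤ y) (hyx : y ≤ x)
    (h : x ^ 2 + y ^ 2 = 1) : c ≤ x ∨ c ≤ (x + y) * r ∨ c ≤ (2 * x + y) * q := by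
  have hqlo : (11 / 25 : ℝ) < q := by nlinarith
  have hqhi : q < 9 / 20 := by nlinarith
  have hx : 0 ≤ x := hy.trans hyx
  by_cases h1 : y ≤ (5 * q - 2) * x
  · exact .inl (le_fst_of_abs_snd_le hc hx h (by rwa [abs_of_nonneg hy]))
  by_cases h2 : 2 * y - x ≤ (5 * q - 2) * (2 * x + y)
  · refine .inr (.inr (le_fst_of_abs_snd_le (v := (2 * y - x) * q) hc (by positivity) ?_ ?_))
    · linear_combination 5 * (x ^ 2 + y ^ 2) * hq2 + h
    · rw [abs_mul, abs_of_pos hq, ← mul_assoc]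
      refine mul_le_mul_of_nonneg_right (abs_le.2 ⟨?_, h2⟩) hq.le
      push Not at h1
      nlinarith [mul_le_mul_of_nonneg_left h1.le (by linarith : 0 ≤ 5 * q)]
  · refine .inr (.inl (le_fst_of_abs_snd_le (v := (x - y) * r) hc (by positivity) ?_ ?_))
    · linear_combination 2 * (x ^ 2 + y ^ 2) * hr2 + h
    · rw [abs_mul, abs_of_pos hr, abs_of_nonneg (sub_nonneg.2 hyx), ← mul_assoc]
      refine mul_le_mul_of_nonneg_right ?_ hr.le
      push Not at h2
      nlinarith

lemma exists_stencil_close {c q r x y : ℝ} (hq : 0 < q) (hq2 : q ^ 2 = 1 / 5) (hr : 0 < r)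
    (hr2 : r ^ 2 = 1 / 2) (hc : c ^ 2 * (1 + (5 * q - 2) ^ 2) = 1) (hx : 0 ≤ x) (hy : 0 ≤ y)
    (h : x ^ 2 + y ^ 2 = 1) :
    c ≤ x ∨ c ≤ y ∨ c ≤ (x + y) * r ∨ c ≤ (2 * x + y) * q ∨ c ≤ (2 * y + x) * q := by
  rcases le_total y x with hyx | hxy
  · have := exists_stencil_close_of_le hq hq2 hr hr2 hc hy hyx h
    tauto
  · have := exists_stencil_close_of_le hq hq2 hr hr2 hc hx hxy (by linarith)
    rw [add_comm y x] at this
    tauto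

/-- The width-2 stencil directions (width-1 directions together with the normalized
directions `(±2,±1)/√5, (±1,±2)/√5`) have directional resolution `dθ = arctan(1/2)/2`,
and `tan²(arctan(1/2)/2) = (√5 - 2)²`. -/
theorem stmt_14 (V : Fin 16 → ℝ × ℝ)
    (hV : V = ![(1, 0), (0, 1), (-1, 0), (0, -1),
      (1 / Real.sqrt 2, 1 / Real.sqrt 2), (-1 / Real.sqrt 2, 1 / Real.sqrt 2),
      (1 / Real.sqrt 2, -1 / Real.sqrt 2), (-1 / Real.sqrt 2, -1 / Real.sqrt 2),
      (2 / Real.sqrt 5, 1 / Real.sqrt 5), (1 / Real.sqrt 5, 2 / Real.sqrt 5),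
      (2 / Real.sqrt 5, -1 / Real.sqrt 5), (1 / Real.sqrt 5, -2 / Real.sqrt 5),
      (-2 / Real.sqrt 5, 1 / Real.sqrt 5), (-1 / Real.sqrt 5, 2 / Real.sqrt 5),
      (-2 / Real.sqrt 5, -1 / Real.sqrt 5), (-1 / Real.sqrt 5, -2 / Real.sqrt 5)]) :
    IsGreatest {y : ℝ | ∃ w : ℝ × ℝ, w.1 ^ 2 + w.2 ^ 2 = 1 ∧
      y = ⨅ i : Fin 16, Real.arccos (w.1 * (V i).1 + w.2 * (V i).2)}
      (Real.arctan (1 / 2) / 2) ∧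
    Real.tan (Real.arctan (1 / 2) / 2) ^ 2 = (Real.sqrt 5 - 2) ^ 2 := by
  have htan := tan_half_arctan_half
  refine ⟨?_, by rw [htan]⟩
  have hpos : 0 < arctan (1 / 2) := arctan_pos.2 (by norm_num)
  have hlt : arctan (1 / 2) < π / 2 := arctan_lt_pi_div_two _
  have hpi := pi_pos
  set φ := arctan (1 / 2) / 2 with hφ
  have hcpos : 0 < cos φ := cos_pos_of_mem_Ioo ⟨by linarith, by linarith⟩
  have hcs : cos φ ^ 2 + sin φ ^ 2 = 1 := cos_sq_add_sin_sq φ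
  have harccos : arccos (cos φ) = φ := arccos_cos (by linarith) (by linarith)
  obtain ⟨q, hqdef⟩ : ∃ q, q = (√5)⁻¹ := ⟨_, rfl⟩
  obtain ⟨r, hrdef⟩ : ∃ r, r = (√2)⁻¹ := ⟨_, rfl⟩
  have hq : 0 < q := by rw [hqdef]; positivity
  have hr : 0 < r := by rw [hrdef]; positivity
  have hq2 : q ^ 2 = 1 / 5 := by rw [hqdef, inv_pow, sq_sqrt (by norm_num)]; norm_num
  have hr2 : r ^ 2 = 1 / 2 := by rw [hrdef, inv_pow, sq_sqrt (by norm_num)]; norm_num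
  have h5 : √5 = 5 * q := by
    have : q * √5 = 1 := by rw [hqdef]; exact inv_mul_cancel₀ (by positivity)
    linear_combination (-5 * √5) * hq2 + 5 * q * this
  have hs : sin φ = (5 * q - 2) * cos φ := by
    rw [← h5, ← htan, tan_mul_cos hcpos.ne']
  have hc : cos φ ^ 2 * (1 + (5 * q - 2) ^ 2) = 1 := by rw [hs] at hcs; linarith
  simp only [div_eq_mul_inv, ← hqdef, ← hrdef] at hV
  have hbdd (w : ℝ × ℝ) :
      BddBelow (Set.range fun i : Fin 16 ↦ arccos (w.1 * (V i).1 + w.2 * (V i).2)) :=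
    ⟨0, by rintro _ ⟨i, rfl⟩; exact arccos_nonneg _⟩
  constructor
  · have hqlo : (11 / 25 : ℝ) < q := by nlinarith
    have hqhi : q < 9 / 20 := by nlinarith
    have hrlo : (7 / 10 : ℝ) < r := by nlinarith
    have hrhi : r < 3 / 4 := by nlinarith
    have hqrlo : 77 / 250 < q * r := by nlinarith
    have hqrhi : q * r < 27 / 80 := by nlinarith
    have hdot (i : Fin 16) : cos φ * (V i).1 + sin φ * (V i).2 ≤ cos φ := by
      suffices h : (V i).1 + (5 * q - 2) * (V i).2 ≤ 1 by
        rw [hs]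
        nlinarith [mul_le_mul_of_nonneg_left h hcpos.le]
      rw [hV]
      fin_cases i <;> simp <;> linarith
    refine ⟨(cos φ, sin φ), hcs, le_antisymm (le_ciInf fun i ↦ ?_) ?_⟩
    · rw [← harccos]
      exact arccos_le_arccos (by rw [harccos]; exact hdot i)
    · refine (ciInf_le (hbdd (cos φ, sin φ)) 0).trans ?_
      simp [hV, harccos]
  · rintro _ ⟨⟨x, y⟩, hw, rfl⟩
    obtain ⟨i, hi⟩ : ∃ i, cos φ ≤ x * (V i).1 + y * (V i).2 := by
      by_contra! h
      rw [hV] at h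
      simp [Fin.forall_fin_succ] at h
      have key (a b : ℝ) := exists_stencil_close (x := a) (y := b) hq hq2 hr hr2 hc
      simp only at hw
      rcases le_total 0 x with hx | hx <;> rcases le_total 0 y with hy | hy
      · rcases key x y hx hy hw with h | h | h | h | h <;> linarith
      · rcases key x (-y) hx (by linarith) (by linarith) with h | h | h | h | h <;> linarith
      · rcases key (-x) y (by linarith) hy (by linarith) with h | h | h | h | h <;> linarith
      · rcases key (-x) (-y) (by linarith) (by linarith) (by linarith) with
          h | h | h | h | h <;> linarith
    rw [← harccos]
    exact (ciInf_le (hbdd (x, y)) i).trans (arccos_le_arccos hi)
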